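/- arXiv:1307.7672 — 3 statements merged into one kernel-verified Lean document; each statement's English description precedes it below -/
import Mathlib

section
/- Let A be a finite-dimensional (left) Leibniz algebra over an algebraically closed field of characteristic zero. Then A is nilpotent if and only if A admits an invertible Leibniz derivation of order s for some integer s ≥ 2. -/
/-- Span of all brackets `[u, v]` with `u ∈ p`, `v ∈ q`. -/
def bracketSpan {K A : Type*} [Field K] [AddCommGroup A] [Module K A]
    (br : A →ₗ[K] A →ₗ[K] A) (p q : Submodule K A) : Submodule K A :=
  Submodule.span K {x | ∃ a ∈ p, ∃ b ∈ q, br a b = x}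

/-- Derived series: `derSeries br 0 = A` and
`derSeries br (n+1) = [derSeries br n, derSeries br n]`; so `derSeries br n = A^(n+1)`.
The algebra is solvable iff some term vanishes. -/
def derSeries {K A : Type*} [Field K] [AddCommGroup A] [Module K A]
    (br : A →ₗ[K] A →ₗ[K] A) : ℕ → Submodule K A
  | 0 => ⊤
  | n + 1 => bracketSpan br (derSeries br n) (derSeries br n)

/-- Lower central series: `lcs br 0 = A` and `lcs br (n+1) = [A, lcs br n]`;
so `lcs br n = A^(n+1)`.  The algebra is nilpotent iff some term vanishes. -/
def lcs {K A : Type*} [Field K] [AddCommGroup A] [Module K A]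
    (br : A →ₗ[K] A →ₗ[K] A) : ℕ → Submodule K A
  | 0 => ⊤
  | n + 1 => bracketSpan br ⊤ (lcs br n)

/-- The left-normed product `[x_1, x_2, ..., x_s] = [x_1, [x_2, [... [x_{s-1}, x_s] ...]]]`
of a list of elements (with junk value `0` on the empty list). -/
def leftNormedProd {K A : Type*} [Field K] [AddCommGroup A] [Module K A]
    (br : A →ₗ[K] A →ₗ[K] A) : List A → A
  | [] => 0
  | [x] => x
  | x :: xs => br x (leftNormedProd br xs)

/-!
If `A` is nilpotent, the identity is a Leibniz derivation of every large order, since both sides of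
the defining identity vanish.

Conversely, let `D` be an injective Leibniz derivation of order `s`. The operator `ad D` acts as a
derivation on products of `s - 1` left multiplications, so for `x` in the generalised eigenspace of
`D` at `c ≠ 0` the operator `(br x) ^ (s - 1)` shifts the eigenspaces of `D` by `(s - 1) c` and is
nilpotent. Since the homogeneous elements span `A`, Lie's theorem shows that `A` is nilpotent as
soon as it is solvable.

For solvability let `P` be the stable term of the derived series; it is a `D`-stable ideal with
`[P, P] = P`, and we may replace `A` by `P`. Since `A` is perfect, every `x` is a combination of
products of `s - 1` factors, so `⁅D, br x⁆ = br x'` for some `x'`. From this,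
`E x = ⁅D, br x⁆ - br (D x)` satisfies `E [x, y] = ⁅E x, br y⁆ = ⁅br x, E y⁆`. Expanding
`⁅D, br x⁆` factor by factor then gives `br x' + (s - 1) E x`, hence `E = 0`: left multiplication
is compatible with the eigenspace gradings, so that brackets of left multiplications by homogeneous
elements are again such. By Jacobson's theorem on weakly closed sets all left multiplications are
nilpotent, and by Engel's theorem `A` is nilpotent; being perfect, it vanishes.
-/

attribute [local instance] LieRing.ofAssociativeRing

section WeightSpaces

variable {R : Type*} [CommRing R]

theorem mem_maxGenEigenspace_of_sub_mem {M : Type*} [AddCommGroup M] [Module R M]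
    {E : Module.End R M} {μ : R} {v : M} (hv : E v - μ • v ∈ E.maxGenEigenspace μ) :
    v ∈ E.maxGenEigenspace μ := by
  rw [Module.End.mem_maxGenEigenspace] at hv ⊢
  obtain ⟨k, hk⟩ := hv
  exact ⟨k + 1, by simpa [pow_succ] using hk⟩

theorem apply_mem_maxGenEigenspace {A M : Type*} [AddCommGroup A] [Module R A] [AddCommGroup M]
    [Module R M] {f : A →ₗ[R] M} {D : Module.End R A} {E : Module.End R M}
    (hf : E ∘ₗ f = f ∘ₗ D) {c : R} {x : A} (hx : x ∈ D.maxGenEigenspace c) :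
    f x ∈ E.maxGenEigenspace c := by
  have hshift : (E - c • 1) ∘ₗ f = f ∘ₗ (D - c • 1) := by
    rw [LinearMap.sub_comp, LinearMap.comp_sub, hf, LinearMap.smul_comp, LinearMap.comp_smul]
    rfl
  rw [Module.End.mem_maxGenEigenspace] at hx ⊢
  obtain ⟨k, hk⟩ := hx
  have hpow := LinearMap.congr_fun (Module.End.commute_pow_left_of_commute hshift k) x
  exact ⟨k, hpow.trans ((congrArg f hk).trans (map_zero f))⟩

theorem multilinearMap_apply_mem_maxGenEigenspace {ι A M : Type*} [Fintype ι] [DecidableEq ι]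
    [AddCommGroup A] [Module R A] [AddCommGroup M] [Module R M]
    (f : MultilinearMap R (fun _ : ι => A) M) {D : Module.End R A} {E : Module.End R M}
    (hf : ∀ x, E (f x) = ∑ i, f (Function.update x i (D (x i)))) {x : ι → A} {c : ι → R}
    (hx : ∀ i, x i ∈ D.maxGenEigenspace (c i)) :
    f x ∈ E.maxGenEigenspace (∑ i, c i) := by
  simp only [Module.End.mem_maxGenEigenspace] at hx
  choose k hk using hx
  induction hn : ∑ i, k i using Nat.strong_induction_on generalizing x k with
  | _ n ih =>
  apply mem_maxGenEigenspace_of_sub_mem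
  have hshift : E (f x) - (∑ i, c i) • f x =
      ∑ i, f (Function.update x i ((D - c i • 1) (x i))) := by
    simp [hf, Finset.sum_smul, MultilinearMap.map_update_sub, MultilinearMap.map_update_smul,
      Finset.sum_sub_distrib]
  rw [hshift]
  refine Submodule.sum_mem _ fun i _ => ?_
  rcases hki : k i with _ | m
  · have hxi : x i = 0 := by simpa [hki] using hk i
    rw [hxi, map_zero, MultilinearMap.map_update_zero]
    exact Submodule.zero_mem _
  · refine ih _ ?_ (Function.update k i m) ?_ rfl
    · rw [← hn]
      refine Finset.sum_lt_sum (fun j _ => ?_) ⟨i, Finset.mem_univ i, by simp [hki]⟩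
      rcases eq_or_ne j i with rfl | hj
      · simp [hki]
      · simp [hj]
    · intro j
      rcases eq_or_ne j i with rfl | hj
      · simpa [hki, pow_succ] using hk j
      · simpa [hj] using hk j

theorem maxGenEigenspace_zero_eq_bot {V : Type*} [AddCommGroup V] [Module R V]
    {D : Module.End R V} (hD : Function.Injective D) : D.maxGenEigenspace 0 = ⊥ := by
  refine (Submodule.eq_bot_iff _).mpr fun v hv => ?_
  obtain ⟨k, hk⟩ := (Module.End.mem_maxGenEigenspace ..).mp hv
  rw [zero_smul, sub_zero, Module.End.pow_apply] at hk
  exact hD.iterate k (hk.trans (iterate_map_zero D k).symm)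

theorem isNilpotent_of_mem_maxGenEigenspace_ad {K V : Type*} [Field K] [CharZero K]
    [AddCommGroup V] [Module K V] [FiniteDimensional K V] {D T : Module.End K V} {c : K}
    (hc : c ≠ 0) (hD : ⨆ μ, D.maxGenEigenspace μ = ⊤)
    (hT : T ∈ (LieAlgebra.ad K (Module.End K V) D).maxGenEigenspace c) : IsNilpotent T := by
  have hpow (μ : K) (v : V) (hv : v ∈ D.maxGenEigenspace μ) (j : ℕ) :
      (T ^ j) v ∈ D.maxGenEigenspace (j * c + μ) := by
    induction j with
    | zero => simpa using hv
    | succ j ih =>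
      have hadd : (j + 1 : ℕ) * c + μ = c + (j * c + μ) := by push_cast; ring
      rw [pow_succ', Module.End.mul_apply, hadd]
      exact LieModule.lie_mem_maxGenEigenspace_toEnd (L := Module.End K V) (x := D) (y := T) hT ih
  rw [Module.End.isNilpotent_iff_of_finite]
  intro v
  have hv : v ∈ ⨆ μ, D.maxGenEigenspace μ := hD ▸ Submodule.mem_top
  induction hv using Submodule.iSup_induction' with
  | zero => exact ⟨0, map_zero _⟩
  | add v w _ _ ihv ihw =>
    obtain ⟨a, ha⟩ := ihv
    obtain ⟨b, hb⟩ := ihw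
    refine ⟨a + b, ?_⟩
    rw [map_add, Module.End.pow_map_zero_of_le (Nat.le_add_right a b) ha,
      Module.End.pow_map_zero_of_le (Nat.le_add_left b a) hb, add_zero]
  | mem μ v hv =>
    have hfin := WellFoundedGT.finite_ne_bot_of_iSupIndep (D.independent_maxGenEigenspace)
    have hinj : Function.Injective fun j : ℕ => j * c + μ := fun i j hij => by
      simpa [hc] using hij
    obtain ⟨j, hj⟩ := (hfin.preimage hinj.injOn).exists_notMem
    have hbot : D.maxGenEigenspace (j * c + μ) = ⊥ := not_not.mp hj
    exact ⟨j, by simpa [hbot] using hpow μ v hv j⟩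

theorem span_iUnion_maxGenEigenspace {K V : Type*} [Field K] [IsAlgClosed K] [AddCommGroup V]
    [Module K V] [FiniteDimensional K V] (D : Module.End K V) :
    Submodule.span K (⋃ c, (D.maxGenEigenspace c : Set V)) = ⊤ := by
  rw [← Submodule.iSup_eq_span, Module.End.iSup_maxGenEigenspace_eq_top]

end WeightSpaces

theorem lie_mem_of_mem_span {R L M : Type*} [CommRing R] [LieRing L] [LieAlgebra R L]
    [AddCommGroup M] [Module R M] [LieRingModule L M] [LieModule R L M]
    {S : Set L} {N : Submodule R M} {m : M} (h : ∀ x ∈ S, ⁅x, m⁆ ∈ N)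
    {x : L} (hx : x ∈ Submodule.span R S) : ⁅x, m⁆ ∈ N := by
  induction hx using Submodule.span_induction with
  | mem x hx => exact h x hx
  | zero => simp
  | add x y _ _ hx hy => simpa using N.add_mem hx hy
  | smul c x _ hx => simpa using N.smul_mem c hx

section WeaklyClosed

variable {K L M : Type*} [Field K] [LieRing L] [LieAlgebra K L]
  [AddCommGroup M] [Module K M] [LieRingModule L M] [LieModule K L M]

theorem exists_forall_isNilpotent_of_mem_normalizer [FiniteDimensional K M]
    {H : LieSubalgebra K L} (hH : ∀ x ∈ H, IsNilpotent (LieModule.toEnd K L M x))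
    {w : L} (hw : w ∈ H.normalizer) (hnil : IsNilpotent (LieModule.toEnd K L M w)) :
    ∃ H' : LieSubalgebra K L, H'.toSubmodule = K ∙ w ⊔ H.toSubmodule ∧
      ∀ x ∈ H', IsNilpotent (LieModule.toEnd K L M x) := by
  let H' : LieSubalgebra K L :=
    { (K ∙ w) ⊔ (H : Submodule K L) with
      lie_mem' := fun {y z} => LieSubalgebra.lie_mem_sup_of_mem_normalizer hw }
  have hwH' : w ∈ H' := Submodule.mem_sup_left (Submodule.mem_span_singleton_self w)
  have hHH' : H ≤ H' := (LieSubalgebra.toSubmodule_le_toSubmodule H H').mp le_sup_right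
  have hH'n : H' ≤ H.normalizer := by
    rw [← LieSubalgebra.toSubmodule_le_toSubmodule]
    exact sup_le ((Submodule.span_singleton_le_iff_mem _ _).mpr hw) H.le_normalizer
  obtain ⟨I, hI⟩ := LieSubalgebra.exists_nested_lieIdeal_ofLe_normalizer hHH' hH'n
  have hmem (x : I) : ((x : H') : L) ∈ H := by
    have hx : (x : H') ∈ LieSubalgebra.ofLe hHH' := hI ▸ x.2
    exact (LieSubalgebra.mem_ofLe _ _).mp hx
  have hsup : K ∙ (⟨w, hwH'⟩ : H') ⊔ LieSubmodule.toSubmodule I = ⊤ := by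
    rw [← LieIdeal.toLieSubalgebra_toSubmodule K H' I, hI]
    apply Submodule.map_injective_of_injective (H' : Submodule K L).injective_subtype
    simp only [LieSubalgebra.coe_ofLe, Submodule.map_sup, Submodule.map_subtype_range_inclusion,
      Submodule.map_top, Submodule.range_subtype]
    rw [Submodule.map_subtype_span_singleton]
  have hI_nil : LieModule.IsNilpotent I M :=
    (LieModule.isNilpotent_iff_forall' (R := K)).mpr fun x => hH x (hmem x)
  have hH'_nil : LieModule.IsNilpotent H' M :=
    LieSubmodule.isNilpotentOfIsNilpotentSpanSupEqTop hsup hnil hI_nil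
  exact ⟨H', rfl, fun x hx =>
    (LieModule.isNilpotent_iff_forall' (R := K)).mp hH'_nil ⟨x, hx⟩⟩

end WeaklyClosed

section Jacobson

variable {K V : Type*} [Field K] [AddCommGroup V] [Module K V] [FiniteDimensional K V]

theorem exists_mem_normalizer_of_not_subset {S : Set (Module.End K V)}
    (hlie : ∀ x ∈ S, ∀ y ∈ S, ⁅x, y⁆ ∈ S) {H : LieSubalgebra K (Module.End K V)}
    (hspan : Submodule.span K (S ∩ H) = H.toSubmodule) (hH : ∀ x ∈ H, IsNilpotent x)
    (hSH : ¬ S ⊆ H) : ∃ w ∈ S, w ∉ H ∧ w ∈ H.normalizer := by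
  by_contra! hnorm
  have hnil : LieModule.IsNilpotent H (Module.End K V) :=
    (LieModule.isNilpotent_iff_forall (R := K)).mpr fun x =>
      LieAlgebra.ad_nilpotent_of_nilpotent (hH x x.2)
  have hdescend (k : ℕ) (hk : ∀ w ∈ S,
      w ∈ LieModule.lowerCentralSeries K H (Module.End K V) k → w ∈ H) : S ⊆ H := by
    induction k with
    | zero => exact fun w hw => hk w hw (by simp)
    | succ k ih =>
      refine ih fun w hwS hw => by_contra fun hwH => hnorm w hwS hwH ?_
      refine (H.mem_normalizer_iff' w).mpr fun h hh => ?_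
      refine lie_mem_of_mem_span (S := S ∩ H) (N := H.toSubmodule) ?_ (hspan ▸ hh)
      refine fun x hx => hk _ (hlie x hx.1 w hwS) ?_
      rw [LieModule.lowerCentralSeries_succ]
      exact LieSubmodule.lie_mem_lie (LieSubmodule.mem_top (⟨x, hx.2⟩ : H)) hw
  obtain ⟨k, hk⟩ := LieModule.IsNilpotent.nilpotent K H (Module.End K V)
  refine hSH (hdescend k fun w _ hw => ?_)
  rw [hk, LieSubmodule.mem_bot] at hw
  exact hw ▸ H.zero_mem

/-- Jacobson's theorem on weakly closed sets. -/
theorem isNilpotent_of_mem_span_of_lie_mem {S : Set (Module.End K V)}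
    (hlie : ∀ x ∈ S, ∀ y ∈ S, ⁅x, y⁆ ∈ S) (hnil : ∀ x ∈ S, IsNilpotent x) :
    ∀ x ∈ Submodule.span K S, IsNilpotent x := by
  let nilSub : Set (LieSubalgebra K (Module.End K V)) :=
    {H | Submodule.span K (S ∩ H) = H.toSubmodule ∧ ∀ x ∈ H, IsNilpotent x}
  have hbot : ⊥ ∈ nilSub := by
    refine ⟨le_antisymm (Submodule.span_le.mpr Set.inter_subset_right) ?_, ?_⟩
    · simp
    · rintro x hx
      rw [LieSubalgebra.mem_bot] at hx
      exact hx ▸ IsNilpotent.zero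
  obtain ⟨H, ⟨hspan, hH⟩, hmax⟩ :=
    (LieSubalgebra.wellFoundedGT_of_noetherian K (Module.End K V)).wf.has_min nilSub ⟨⊥, hbot⟩
  suffices hSH : S ⊆ H from fun x hx => hH x ((Submodule.span_le (p := H.toSubmodule)).mpr hSH hx)
  by_contra hSH
  obtain ⟨w, hwS, hwH, hw⟩ := exists_mem_normalizer_of_not_subset hlie hspan hH hSH
  obtain ⟨H', hH', hH'nil⟩ :=
    exists_forall_isNilpotent_of_mem_normalizer (M := V) hH hw (hnil w hwS)
  have hle : H ≤ H' := by
    rw [← LieSubalgebra.toSubmodule_le_toSubmodule, hH']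
    exact le_sup_right
  have hwH' : w ∈ H' := by
    rw [← LieSubalgebra.mem_toSubmodule, hH']
    exact Submodule.mem_sup_left (Submodule.mem_span_singleton_self w)
  refine hmax H' ⟨le_antisymm (Submodule.span_le.mpr Set.inter_subset_right) ?_, hH'nil⟩
    (lt_of_le_of_ne hle fun h => hwH (h ▸ hwH'))
  rw [hH', ← hspan]
  refine sup_le (Submodule.span_mono ?_) (Submodule.span_mono ?_)
  · exact Set.singleton_subset_iff.mpr ⟨hwS, hwH'⟩
  · exact Set.inter_subset_inter_right S hle

end Jacobson

section Solvable

variable {K L : Type*} [Field K] [CharZero K] [IsAlgClosed K] [LieRing L] [LieAlgebra K L]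
  [LieAlgebra.IsSolvable L] {S : Set L}

theorem nontrivial_maxTrivSubmodule_of_isSolvable (hS : Submodule.span K S = ⊤)
    (V : Type*) [AddCommGroup V] [Module K V] [LieRingModule L V] [LieModule K L V]
    [FiniteDimensional K V] [Nontrivial V]
    (hnil : ∀ x ∈ S, IsNilpotent (LieModule.toEnd K L V x)) :
    Nontrivial (LieModule.maxTrivSubmodule K L V) := by
  obtain ⟨χ, hχ⟩ := LieModule.exists_nontrivial_weightSpace_of_isSolvable K L V
  obtain ⟨⟨v, hv⟩, hv0⟩ := exists_ne (0 : LieModule.weightSpace V χ)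
  replace hv0 : v ≠ 0 := fun h => hv0 (Subtype.ext h)
  rw [LieModule.mem_weightSpace] at hv
  have hχ : χ = 0 := by
    refine LinearMap.ext_on hS fun x hx => ?_
    have heig : (LieModule.toEnd K L V x).HasEigenvalue (χ x) :=
      Module.End.hasEigenvalue_of_hasEigenvector ⟨Module.End.mem_eigenspace_iff.mpr (hv x), hv0⟩
    exact (heig.isNilpotent_of_isNilpotent (hnil x hx)).eq_zero
  have hmem : v ∈ LieModule.maxTrivSubmodule K L V := fun x => by simp [hv, hχ]
  exact (LieSubmodule.nontrivial_iff_ne_bot K L V).mpr fun h => hv0 (by simpa [h] using hmem)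

theorem isNilpotent_of_isSolvable_of_span (hS : Submodule.span K S = ⊤)
    (V : Type*) [AddCommGroup V] [Module K V] [LieRingModule L V] [LieModule K L V]
    [FiniteDimensional K V] (hnil : ∀ x ∈ S, IsNilpotent (LieModule.toEnd K L V x)) :
    LieModule.IsNilpotent L V := by
  induction hd : Module.finrank K V using Nat.strong_induction_on generalizing V with
  | _ d ih =>
  rcases subsingleton_or_nontrivial V with _ | _
  · infer_instance
  let N := LieModule.maxTrivSubmodule K L V
  have : Nontrivial N := nontrivial_maxTrivSubmodule_of_isSolvable hS V hnil
  refine LieModule.nilpotentOfNilpotentQuotient K L V (N := N) le_rfl (ih _ ?_ _ ?_ rfl)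
  · have hN : 0 < Module.finrank K N.toSubmodule := Module.finrank_pos
    have hquot := Submodule.finrank_quotient_add_finrank N.toSubmodule
    change Module.finrank K (V ⧸ N.toSubmodule) < d
    lia
  · exact fun x hx => Module.End.IsNilpotent.mapQ (fun m hm => N.lie_mem hm) (hnil x hx)

end Solvable

section LeftNormedProducts

open Submodule

variable {K A B : Type*} [Field K] [AddCommGroup A] [Module K A] [AddCommGroup B] [Module K B]
  (br : A →ₗ[K] A →ₗ[K] A)

theorem bracketSpan_eq_map₂ (p q : Submodule K A) : bracketSpan br p q = map₂ br p q := by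
  rw [map₂_eq_span_image2]
  rfl

theorem leftNormedProd_cons (x : A) {l : List A} (hl : l ≠ []) :
    leftNormedProd br (x :: l) = br x (leftNormedProd br l) := by
  cases l with
  | nil => contradiction
  | cons y l => rfl

theorem leftNormedProd_concat (l : List A) (z : A) :
    leftNormedProd br (l ++ [z]) = (l.map br).prod z := by
  induction l with
  | nil => rfl
  | cons x l ih => simp [leftNormedProd_cons br x, ih]

/-- The span of the left-normed products of `k` elements of `U`. -/
def leftNormedSpan (U : Submodule K A) (k : ℕ) : Submodule K A :=
  span K {x | ∃ l : List A, l.length = k ∧ (∀ y ∈ l, y ∈ U) ∧ leftNormedProd br l = x}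

theorem leftNormedSpan_one (U : Submodule K A) : leftNormedSpan br U 1 = U := by
  refine le_antisymm (span_le.mpr ?_) fun x hx => subset_span ⟨[x], rfl, by simpa using hx, rfl⟩
  rintro _ ⟨l, hl, hU, rfl⟩
  obtain ⟨x, rfl⟩ := List.length_eq_one_iff.mp hl
  exact hU x (List.mem_singleton_self x)

theorem leftNormedSpan_add_two (U : Submodule K A) (k : ℕ) :
    leftNormedSpan br U (k + 2) = map₂ br U (leftNormedSpan br U (k + 1)) := by
  conv_rhs => enter [2]; rw [← span_eq U]
  rw [leftNormedSpan, leftNormedSpan, map₂_span_span]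
  refine congrArg _ (Set.ext fun x => ⟨?_, ?_⟩)
  · rintro ⟨l, hl, hU, rfl⟩
    obtain ⟨a, l, rfl⟩ := List.exists_cons_of_length_eq_add_one hl
    rw [List.forall_mem_cons] at hU
    exact ⟨a, hU.1, _, ⟨l, by simpa using hl, hU.2, rfl⟩,
      (leftNormedProd_cons br a (by rintro rfl; simp at hl)).symm⟩
  · rintro ⟨a, ha, _, ⟨l, hl, hU, rfl⟩, rfl⟩
    exact ⟨a :: l, by simp [hl], List.forall_mem_cons.mpr ⟨ha, hU⟩,
      leftNormedProd_cons br a (by rintro rfl; simp at hl)⟩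

theorem leftNormedSpan_mono {U V : Submodule K A} (h : U ≤ V) (k : ℕ) :
    leftNormedSpan br U k ≤ leftNormedSpan br V k :=
  span_mono fun _ ⟨l, hl, hU, hx⟩ => ⟨l, hl, fun y hy => h (hU y hy), hx⟩

theorem map_map₂_of_hom {br} {br' : B →ₗ[K] B →ₗ[K] B} {f : A →ₗ[K] B}
    (hf : ∀ a b, f (br a b) = br' (f a) (f b)) (U V : Submodule K A) :
    (map₂ br U V).map f = map₂ br' (U.map f) (V.map f) := by
  have hcomp : br.compr₂ f = br'.compl₁₂ f f := LinearMap.ext₂ hf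
  rw [map_map₂, hcomp]
  simp only [map₂_map_map]

theorem map_leftNormedSpan {br} {br' : B →ₗ[K] B →ₗ[K] B} {f : A →ₗ[K] B}
    (hf : ∀ a b, f (br a b) = br' (f a) (f b)) (U : Submodule K A) (k : ℕ) :
    (leftNormedSpan br U (k + 1)).map f = leftNormedSpan br' (U.map f) (k + 1) := by
  induction k with
  | zero => simp only [zero_add, leftNormedSpan_one]
  | succ k ih => rw [leftNormedSpan_add_two, leftNormedSpan_add_two, ← ih, map_map₂_of_hom hf]

theorem leftNormedSpan_eq_self_of_map₂_eq_self {U : Submodule K A} (hU : map₂ br U U = U) (k : ℕ) :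
    leftNormedSpan br U (k + 1) = U := by
  induction k with
  | zero => exact leftNormedSpan_one br U
  | succ k ih => rw [leftNormedSpan_add_two, ih, hU]

theorem lcs_eq_leftNormedSpan (k : ℕ) : lcs br k = leftNormedSpan br ⊤ (k + 1) := by
  induction k with
  | zero => exact (leftNormedSpan_one br ⊤).symm
  | succ k ih => rw [leftNormedSpan_add_two, ← ih, ← bracketSpan_eq_map₂, lcs]

end LeftNormedProducts

section Tangent

open Submodule

variable {K A : Type*} [Field K] [AddCommGroup A] [Module K A] (br : A →ₗ[K] A →ₗ[K] A)

/-- The extension of scalars of `br` to the dual numbers, a pair `(x, x')` standing for `x + x' ε`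
with `ε² = 0`: its products differentiate those of `br`, so that Leibniz derivations can be read
off from their graphs. -/
def tangentBracket : A × A →ₗ[K] A × A →ₗ[K] A × A :=
  LinearMap.mk₂ K (fun u v => (br u.1 v.1, br u.2 v.1 + br u.1 v.2))
    (fun u u' v => by ext <;> simp; abel) (fun c u v => by ext <;> simp)
    (fun u v v' => by ext <;> simp; abel) (fun c u v => by ext <;> simp)

@[simp]
theorem tangentBracket_apply (u v : A × A) :
    tangentBracket br u v = (br u.1 v.1, br u.2 v.1 + br u.1 v.2) :=
  rfl

theorem leftNormedProd_tangentBracket_ofFn {s : ℕ} (x y : Fin s → A) :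
    leftNormedProd (tangentBracket br) (List.ofFn fun i => (x i, y i)) =
      (leftNormedProd br (List.ofFn x),
        ∑ i, leftNormedProd br (List.ofFn (Function.update x i (y i)))) := by
  induction s with
  | zero => rfl
  | succ s ih =>
    rcases s with _ | s
    · simp [leftNormedProd]
    · obtain ⟨a, x, rfl⟩ : ∃ a x', x = Fin.cons a x' := ⟨_, _, (Fin.cons_self_tail x).symm⟩
      have hne (z : Fin (s + 1) → A) : List.ofFn z ≠ [] := by simp
      rw [Fin.sum_univ_succ, List.ofFn_succ, leftNormedProd_cons _ _ (by simp)]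
      simp only [Fin.cons_zero, Fin.cons_succ, ih, tangentBracket_apply, Fin.update_cons_zero,
        ← Fin.cons_update, List.ofFn_cons, leftNormedProd_cons br _ (hne _), map_sum]

/-- `D` is a Leibniz derivation of order `s` of the bracket `br`; the factors `x_1, ..., x_s`
are indexed from `0`. -/
def IsLeibnizDerivation (D : Module.End K A) (s : ℕ) : Prop :=
  ∀ x : Fin s → A, D (leftNormedProd br (List.ofFn x)) =
    ∑ j, leftNormedProd br (List.ofFn (Function.update x j (D (x j))))

variable {br}

theorem isLeibnizDerivation_iff_leftNormedSpan_graph_le {D : Module.End K A} {s : ℕ} :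
    IsLeibnizDerivation br D s ↔ leftNormedSpan (tangentBracket br) D.graph s ≤ D.graph := by
  have hprod (x : Fin s → A) := leftNormedProd_tangentBracket_ofFn br x (D ∘ x)
  simp only [leftNormedSpan, span_le]
  constructor
  · rintro hD _ ⟨l, rfl, hl, rfl⟩
    let x : Fin l.length → A := fun i => (l.get i).1
    have hlx : l = List.ofFn fun i => (x i, (D ∘ x) i) := by
      refine (List.ofFn_get l).symm.trans (congrArg List.ofFn (funext fun i => ?_))
      exact Prod.ext rfl (hl _ (l.get_mem i))
    rw [hlx, leftNormedProd_tangentBracket_ofFn]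
    exact (hD x).symm
  · intro hD x
    have hmem := hD ⟨_, List.length_ofFn, by simp, hprod x⟩
    exact hmem.symm

theorem isLeibnizDerivation_of_lcs_eq_bot {n : ℕ} (hlcs : lcs br n = ⊥) (D : Module.End K A) :
    IsLeibnizDerivation br D (n + 1) := by
  have hzero (x : Fin (n + 1) → A) : leftNormedProd br (List.ofFn x) = 0 := by
    rw [← mem_bot K, ← hlcs, lcs_eq_leftNormedSpan]
    exact subset_span ⟨_, List.length_ofFn, fun _ _ => mem_top, rfl⟩
  intro x
  simp only [hzero, map_zero, Finset.sum_const_zero]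

end Tangent

section Leibniz

open Submodule

variable {K A : Type*} [Field K] [AddCommGroup A] [Module K A] {br : A →ₗ[K] A →ₗ[K] A}

/-- The left Leibniz identity: every left multiplication `br a` is a derivation of `br`. -/
def IsLeibniz (br : A →ₗ[K] A →ₗ[K] A) : Prop :=
  ∀ a b c, br a (br b c) = br (br a b) c + br b (br a c)

theorem IsLeibniz.map_apply (hbr : IsLeibniz br) (a b : A) : br (br a b) = ⁅br a, br b⁆ :=
  LinearMap.ext fun c => eq_sub_of_add_eq (hbr a b c).symm

theorem IsLeibniz.tangentBracket (hbr : IsLeibniz br) : IsLeibniz (tangentBracket br) := by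
  rintro ⟨a, a'⟩ ⟨b, b'⟩ ⟨c, c'⟩
  ext
  · exact hbr a b c
  · simp only [tangentBracket_apply, map_add, LinearMap.add_apply, Prod.snd_add, hbr a' b c,
      hbr a b' c, hbr a b c']
    abel

theorem IsLeibniz.apply_mem_leftNormedSpan (hbr : IsLeibniz br) {U : Submodule K A} {j k : ℕ}
    {x y : A} (hx : x ∈ leftNormedSpan br U (j + 1)) (hy : y ∈ leftNormedSpan br U (k + 1)) :
    br x y ∈ leftNormedSpan br U (j + k + 2) := by
  have hcons {a z : A} {i : ℕ} (ha : a ∈ U) (hz : z ∈ leftNormedSpan br U (i + 1)) :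
      br a z ∈ leftNormedSpan br U (i + 2) :=
    leftNormedSpan_add_two br U i ▸ apply_mem_map₂ br ha hz
  induction j generalizing x y k with
  | zero =>
    rw [zero_add, leftNormedSpan_one] at hx
    simpa using hcons hx hy
  | succ j ih =>
    suffices hle : leftNormedSpan br U (j + 2) ≤
        (leftNormedSpan br U (j + 1 + k + 2)).comap (br.flip y) from hle hx
    rw [leftNormedSpan_add_two, map₂_le]
    intro a ha b hb
    have hab : br (br a b) y = br a (br b y) - br b (br a y) := eq_sub_of_add_eq (hbr a b y).symm
    rw [mem_comap, LinearMap.flip_apply, hab]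
    have habyk : br b (br a y) ∈ leftNormedSpan br U (j + (k + 1) + 2) := ih hb (hcons ha hy)
    rw [Nat.add_right_comm j 1 k]
    exact sub_mem (hcons ha (ih hb hy)) habyk

theorem IsLeibnizDerivation.lie_prod {D : Module.End K A} {n : ℕ}
    (hD : IsLeibnizDerivation br D (n + 1)) (x : Fin n → A) :
    ⁅D, (List.ofFn fun i => br (x i)).prod⁆ =
      ∑ i, (List.ofFn fun j => br (Function.update x i (D (x i)) j)).prod := by
  have hsnoc (y : Fin n → A) (z : A) :
      leftNormedProd br (List.ofFn (Fin.snoc y z : Fin (n + 1) → A)) =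
        (List.ofFn fun i => br (y i)).prod z := by
    rw [List.ofFn_succ', List.concat_eq_append, leftNormedProd_concat]
    simp only [Fin.snoc_castSucc, Fin.snoc_last, List.map_ofFn, Function.comp_def]
  ext z
  have hz := hD (Fin.snoc x z)
  simp only [Fin.sum_univ_castSucc, Fin.snoc_castSucc, Fin.snoc_last, ← Fin.snoc_update,
    Fin.update_snoc_last, hsnoc] at hz
  rw [Ring.lie_def, LinearMap.sub_apply, LinearMap.sum_apply]
  exact sub_eq_of_eq_add hz

theorem IsLeibnizDerivation.isNilpotent_apply [CharZero K] [IsAlgClosed K] [FiniteDimensional K A]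
    {D : Module.End K A} {n : ℕ} (hD : IsLeibnizDerivation br D (n + 1)) (hn : n ≠ 0)
    (hinj : Function.Injective D) {c : K} {x : A} (hx : x ∈ D.maxGenEigenspace c) :
    IsNilpotent (br x) := by
  rcases eq_or_ne c 0 with rfl | hc
  · have hx0 : x = 0 := by simpa [maxGenEigenspace_zero_eq_bot hinj] using hx
    simp [hx0]
  let f := (MultilinearMap.mkPiAlgebraFin K n (Module.End K A)).compLinearMap fun _ => br
  have hf (y : Fin n → A) : LieAlgebra.ad K (Module.End K A) D (f y) =
      ∑ i, f (Function.update y i (D (y i))) := hD.lie_prod y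
  have hweight := multilinearMap_apply_mem_maxGenEigenspace f hf (x := fun _ => x) fun _ => hx
  have hfx : f (fun _ => x) = br x ^ n := by simp [f]
  rw [hfx, Finset.sum_const, Finset.card_univ, Fintype.card_fin] at hweight
  refine IsNilpotent.of_pow (isNilpotent_of_mem_maxGenEigenspace_ad (smul_ne_zero hn hc) ?_ hweight)
  exact Module.End.iSup_maxGenEigenspace_eq_top D

end Leibniz

section Perfect

open Submodule

variable {K A : Type*} [Field K] [AddCommGroup A] [Module K A] {br : A →ₗ[K] A →ₗ[K] A}
  {D : Module.End K A} {n : ℕ}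

theorem IsLeibnizDerivation.lie_apply_of_mem_leftNormedSpan
    (hD : IsLeibnizDerivation br D (n + 2)) (hbr : IsLeibniz br)
    {u : A × A} (hu : u ∈ leftNormedSpan (tangentBracket br) D.graph (n + 1)) :
    ⁅D, br u.1⁆ = br u.2 := by
  ext z
  have hz : (z, D z) ∈ leftNormedSpan (tangentBracket br) D.graph (0 + 1) := by
    rw [zero_add, leftNormedSpan_one]
    rfl
  have hmem := isLeibnizDerivation_iff_leftNormedSpan_graph_le.mp hD
    (hbr.tangentBracket.apply_mem_leftNormedSpan (j := n) (k := 0) hu hz)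
  rw [LinearMap.mem_graph_iff] at hmem
  exact sub_eq_of_eq_add hmem.symm

variable (br D) in
/-- The failure of `D` to be a derivation of `br`, as an operator: `y` is sent to
`D (br x y) - br x (D y) - br (D x) y`. -/
def derivationDefect : A →ₗ[K] Module.End K A :=
  LieAlgebra.ad K (Module.End K A) D ∘ₗ br - br ∘ₗ D

theorem derivationDefect_apply (x : A) : derivationDefect br D x = ⁅D, br x⁆ - br (D x) :=
  rfl

theorem exists_mem_leftNormedSpan_graph (hperf : map₂ br ⊤ ⊤ = ⊤) (k : ℕ) (x : A) :
    ∃ x', (x, x') ∈ leftNormedSpan (tangentBracket br) D.graph (k + 1) := by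
  have hfst : D.graph.map (LinearMap.fst K A A) = ⊤ :=
    eq_top_iff.mpr fun a _ => ⟨(a, D a), rfl, rfl⟩
  have hx : x ∈ (leftNormedSpan (tangentBracket br) D.graph (k + 1)).map (LinearMap.fst K A A) := by
    rw [map_leftNormedSpan (fun _ _ => rfl), hfst, leftNormedSpan_eq_self_of_map₂_eq_self br hperf]
    exact mem_top
  obtain ⟨⟨_, x'⟩, hx', rfl⟩ := hx
  exact ⟨x', hx'⟩

theorem IsLeibnizDerivation.derivationDefect_apply_eq_lie_left
    (hD : IsLeibnizDerivation br D (n + 2)) (hbr : IsLeibniz br) (hperf : map₂ br ⊤ ⊤ = ⊤)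
    (x y : A) : derivationDefect br D (br x y) = ⁅derivationDefect br D x, br y⁆ := by
  obtain ⟨y', hy⟩ := exists_mem_leftNormedSpan_graph (D := D) hperf n y
  have hlie_y : ⁅D, br y⁆ = br y' := hD.lie_apply_of_mem_leftNormedSpan hbr hy
  have hDxy : br (D x) y + br x y' = D (br x y) := by
    refine isLeibnizDerivation_iff_leftNormedSpan_graph_le.mp hD ?_
      (x := tangentBracket br (x, D x) (y, y'))
    rw [leftNormedSpan_add_two]
    exact apply_mem_map₂ _ rfl hy
  rw [derivationDefect_apply, hbr.map_apply, leibniz_lie, hlie_y, ← hDxy, map_add, hbr.map_apply,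
    hbr.map_apply, derivationDefect_apply, sub_lie]
  abel

theorem IsLeibnizDerivation.derivationDefect_apply_eq_lie_right
    (hD : IsLeibnizDerivation br D (n + 2)) (hbr : IsLeibniz br) (hperf : map₂ br ⊤ ⊤ = ⊤)
    (x y : A) : derivationDefect br D (br x y) = ⁅br x, derivationDefect br D y⁆ := by
  have hleft := hD.derivationDefect_apply_eq_lie_left hbr hperf
  suffices htop : ⊤ ≤ LinearMap.eqLocus (derivationDefect br D ∘ₗ br x)
      (LieAlgebra.ad K (Module.End K A) (br x) ∘ₗ derivationDefect br D) from
    htop mem_top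
  rw [← hperf, map₂_le]
  intro a _ b _
  have hjac :
      ⁅derivationDefect br D x, ⁅br a, br b⁆⁆ = ⁅br x, ⁅derivationDefect br D a, br b⁆⁆ := by
    have hdefect := congrArg (derivationDefect br D) (hbr a x b)
    rw [map_add, hleft, hleft (br a x), hleft a, hleft x, hbr.map_apply, hbr.map_apply,
      leibniz_lie] at hdefect
    exact (add_left_cancel hdefect).symm
  change derivationDefect br D (br x (br a b)) = ⁅br x, derivationDefect br D (br a b)⁆
  rw [hleft, hleft, hbr.map_apply, hjac]

-- Each of the `k + 1` factors of a left-normed product contributes its defect once.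
theorem IsLeibnizDerivation.lie_apply_eq_add_smul_derivationDefect
    (hD : IsLeibnizDerivation br D (n + 2)) (hbr : IsLeibniz br) (hperf : map₂ br ⊤ ⊤ = ⊤)
    {k : ℕ} {u : A × A} (hu : u ∈ leftNormedSpan (tangentBracket br) D.graph (k + 1)) :
    ⁅D, br u.1⁆ = br u.2 + ((k + 1 : ℕ) : K) • derivationDefect br D u.1 := by
  have hleft := hD.derivationDefect_apply_eq_lie_left hbr hperf
  have hright := hD.derivationDefect_apply_eq_lie_right hbr hperf
  induction k generalizing u with
  | zero =>
    rw [zero_add, leftNormedSpan_one, LinearMap.mem_graph_iff] at hu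
    simp [derivationDefect_apply, hu]
  | succ k ih =>
    let E₁ := LieAlgebra.ad K (Module.End K A) D ∘ₗ br ∘ₗ LinearMap.fst K A A
    let E₂ := br ∘ₗ LinearMap.snd K A A +
      ((k + 1 + 1 : ℕ) : K) • derivationDefect br D ∘ₗ LinearMap.fst K A A
    suffices hle : leftNormedSpan (tangentBracket br) D.graph (k + 2) ≤ LinearMap.eqLocus E₁ E₂ from
      hle hu
    rw [leftNormedSpan_add_two, map₂_le]
    rintro ⟨a, a'⟩ ha ⟨b, b'⟩ hb
    obtain rfl : a' = D a := ha
    have hlie_a : ⁅D, br a⁆ = br (D a) + derivationDefect br D a := (add_sub_cancel _ _).symm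
    have hlie_b : ⁅D, br b⁆ = br b' + ((k + 1 : ℕ) : K) • derivationDefect br D b := ih hb
    change ⁅D, br (br a b)⁆ = br (br (D a) b + br a b') +
      ((k + 1 + 1 : ℕ) : K) • derivationDefect br D (br a b)
    rw [hbr.map_apply, leibniz_lie, hlie_a, hlie_b, map_add, hbr.map_apply, hbr.map_apply,
      add_lie, lie_add, lie_smul, ← hleft, ← hright, Nat.cast_succ (k + 1), add_smul, one_smul]
    abel

theorem IsLeibnizDerivation.derivationDefect_eq_zero [CharZero K]
    (hD : IsLeibnizDerivation br D (n + 2)) (hbr : IsLeibniz br) (hperf : map₂ br ⊤ ⊤ = ⊤) :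
    derivationDefect br D = 0 := by
  ext1 x
  obtain ⟨x', hx⟩ := exists_mem_leftNormedSpan_graph (D := D) hperf n x
  have hdefect := hD.lie_apply_eq_add_smul_derivationDefect hbr hperf hx
  rw [hD.lie_apply_of_mem_leftNormedSpan hbr hx, left_eq_add] at hdefect
  exact (smul_eq_zero.mp hdefect).resolve_left (Nat.cast_ne_zero.mpr n.succ_ne_zero)

theorem IsLeibnizDerivation.lie_apply_of_perfect [CharZero K]
    (hD : IsLeibnizDerivation br D (n + 2)) (hbr : IsLeibniz br) (hperf : map₂ br ⊤ ⊤ = ⊤)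
    (x : A) : ⁅D, br x⁆ = br (D x) := by
  have hdefect := hD.derivationDefect_eq_zero hbr hperf
  exact sub_eq_zero.mp (LinearMap.congr_fun hdefect x)

end Perfect

section LeftMultiplications

open Submodule

variable {K A : Type*} [Field K] [AddCommGroup A] [Module K A] {br : A →ₗ[K] A →ₗ[K] A}

/-- The Lie algebra of left multiplications of a Leibniz algebra. -/
def IsLeibniz.leftMulLie (hbr : IsLeibniz br) : LieSubalgebra K (Module.End K A) :=
  { LinearMap.range br with
    lie_mem' := by
      rintro _ _ ⟨a, rfl⟩ ⟨b, rfl⟩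
      exact ⟨br a b, hbr.map_apply a b⟩ }

theorem IsLeibniz.lcs_le_lowerCentralSeries (hbr : IsLeibniz br) (m : ℕ) :
    lcs br m ≤ (LieModule.lowerCentralSeries K hbr.leftMulLie A m).toSubmodule := by
  induction m with
  | zero => exact le_top
  | succ m ih =>
    rw [lcs, bracketSpan, span_le]
    rintro _ ⟨a, -, b, hb, rfl⟩
    rw [LieModule.lowerCentralSeries_succ]
    exact LieSubmodule.lie_mem_lie (LieSubmodule.mem_top (⟨br a, a, rfl⟩ : hbr.leftMulLie)) (ih hb)

theorem IsLeibniz.exists_lcs_eq_bot (hbr : IsLeibniz br)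
    (hnil : LieModule.IsNilpotent hbr.leftMulLie A) : ∃ m, lcs br m = ⊥ := by
  obtain ⟨m, hm⟩ := LieModule.IsNilpotent.nilpotent K hbr.leftMulLie A
  exact ⟨m, le_bot_iff.mp (by simpa [hm] using hbr.lcs_le_lowerCentralSeries m)⟩

theorem IsLeibniz.exists_lcs_eq_bot_of_forall_isNilpotent [FiniteDimensional K A]
    (hbr : IsLeibniz br) (hnil : ∀ a, IsNilpotent (br a)) : ∃ m, lcs br m = ⊥ := by
  refine hbr.exists_lcs_eq_bot ((LieModule.isNilpotent_iff_forall' (R := K)).mpr ?_)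
  rintro ⟨_, a, rfl⟩
  exact hnil a

theorem IsLeibniz.derivedSeries_le_map_derSeries (hbr : IsLeibniz br) (k : ℕ) :
    (LieAlgebra.derivedSeries K hbr.leftMulLie k).toSubmodule.map hbr.leftMulLie.subtype ≤
      (derSeries br k).map br := by
  induction k with
  | zero =>
    rintro _ ⟨⟨_, a, rfl⟩, -, rfl⟩
    exact ⟨a, mem_top, rfl⟩
  | succ k ih =>
    rw [LieAlgebra.derivedSeries_def, LieAlgebra.derivedSeriesOfIdeal_succ,
      LieSubmodule.lieIdeal_oper_eq_linear_span', map_span_le]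
    rintro _ ⟨X, hX, Y, hY, rfl⟩
    obtain ⟨a, ha, haX⟩ := ih (mem_map_of_mem hX)
    obtain ⟨b, hb, hbY⟩ := ih (mem_map_of_mem hY)
    refine ⟨br a b, subset_span ⟨a, ha, b, hb, rfl⟩, ?_⟩
    rw [hbr.map_apply, haX, hbY]
    rfl

theorem IsLeibniz.isSolvable_leftMulLie (hbr : IsLeibniz br) {k : ℕ} (hk : derSeries br k = ⊥) :
    LieAlgebra.IsSolvable hbr.leftMulLie := by
  refine LieAlgebra.IsSolvable.mk (R := K) (k := k) ?_
  have hle := hbr.derivedSeries_le_map_derSeries k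
  rw [hk, Submodule.map_bot, le_bot_iff] at hle
  rw [← LieSubmodule.toSubmodule_inj]
  exact map_injective_of_injective Subtype.val_injective (hle.trans (Submodule.map_bot _).symm)

theorem IsLeibniz.exists_lcs_eq_bot_of_derSeries_eq_bot [CharZero K] [IsAlgClosed K]
    [FiniteDimensional K A] (hbr : IsLeibniz br) {k : ℕ} (hk : derSeries br k = ⊥) {X : Set A}
    (hX : span K X = ⊤) (hnil : ∀ x ∈ X, IsNilpotent (br x)) : ∃ m, lcs br m = ⊥ := by
  have : LieAlgebra.IsSolvable hbr.leftMulLie := hbr.isSolvable_leftMulLie hk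
  let S : Set hbr.leftMulLie := {T | ∃ x ∈ X, br x = T}
  have hS : span K S = ⊤ := by
    refine map_injective_of_injective (f := hbr.leftMulLie.toSubmodule.subtype)
      Subtype.val_injective ?_
    have himage : hbr.leftMulLie.toSubmodule.subtype '' S = br '' X := by
      ext T
      constructor
      · rintro ⟨T, ⟨x, hx, hxT⟩, rfl⟩
        exact ⟨x, hx, hxT⟩
      · rintro ⟨x, hx, rfl⟩
        exact ⟨⟨br x, x, rfl⟩, ⟨x, hx, rfl⟩, rfl⟩
    rw [map_span, himage, ← map_span, hX, Submodule.map_top, map_subtype_top]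
    rfl
  refine hbr.exists_lcs_eq_bot (isNilpotent_of_isSolvable_of_span hS A ?_)
  rintro ⟨_, -⟩ ⟨x, hx, rfl⟩
  exact hnil x hx

end LeftMultiplications

section Homogeneous

open Submodule

variable {K A : Type*} [Field K] [CharZero K] [IsAlgClosed K] [AddCommGroup A] [Module K A]
  [FiniteDimensional K A] {br : A →ₗ[K] A →ₗ[K] A} {D : Module.End K A} {n : ℕ}

theorem IsLeibnizDerivation.isNilpotent_apply_of_perfect
    (hD : IsLeibnizDerivation br D (n + 2)) (hinj : Function.Injective D) (hbr : IsLeibniz br)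
    (hperf : map₂ br ⊤ ⊤ = ⊤) (a : A) : IsNilpotent (br a) := by
  let X : Set A := ⋃ c, D.maxGenEigenspace c
  have hgraded {x : A} {c : K} (hx : x ∈ D.maxGenEigenspace c) :
      br x ∈ (LieAlgebra.ad K (Module.End K A) D).maxGenEigenspace c :=
    apply_mem_maxGenEigenspace (LinearMap.ext (hD.lie_apply_of_perfect hbr hperf)) hx
  have hlie : ∀ S ∈ br '' X, ∀ T ∈ br '' X, ⁅S, T⁆ ∈ br '' X := by
    simp only [X, Set.forall_mem_image, Set.mem_iUnion]
    rintro x ⟨c, hx⟩ y ⟨d, hy⟩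
    have hxy : br x y ∈ D.maxGenEigenspace (c + d) :=
      LieModule.lie_mem_maxGenEigenspace_toEnd (L := Module.End K A) (x := D) (y := br x)
        (hgraded hx) hy
    exact ⟨br x y, Set.mem_iUnion.mpr ⟨c + d, hxy⟩, hbr.map_apply x y⟩
  have hnil : ∀ T ∈ br '' X, IsNilpotent T := by
    simp only [X, Set.forall_mem_image, Set.mem_iUnion]
    rintro x ⟨c, hx⟩
    exact hD.isNilpotent_apply n.succ_ne_zero hinj hx
  refine isNilpotent_of_mem_span_of_lie_mem hlie hnil _ ?_
  rw [← map_span, span_iUnion_maxGenEigenspace]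
  exact mem_map_of_mem mem_top

theorem IsLeibnizDerivation.subsingleton_of_perfect
    (hD : IsLeibnizDerivation br D (n + 2)) (hinj : Function.Injective D) (hbr : IsLeibniz br)
    (hperf : map₂ br ⊤ ⊤ = ⊤) : Subsingleton A := by
  obtain ⟨m, hm⟩ := hbr.exists_lcs_eq_bot_of_forall_isNilpotent
    (hD.isNilpotent_apply_of_perfect hinj hbr hperf)
  rw [lcs_eq_leftNormedSpan, leftNormedSpan_eq_self_of_map₂_eq_self br hperf] at hm
  exact (subsingleton_iff K).mp (subsingleton_of_bot_eq_top hm.symm)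

end Homogeneous

section Ideals

open Submodule

variable {K A : Type*} [Field K] [AddCommGroup A] [Module K A] {br : A →ₗ[K] A →ₗ[K] A}
  {D : Module.End K A} {P : Submodule K A} {n : ℕ}

theorem IsLeibniz.map₂_top_map₂_le (hbr : IsLeibniz br) (hP : map₂ br ⊤ P ≤ P) :
    map₂ br ⊤ (map₂ br P P) ≤ map₂ br P P := by
  rw [map₂_le] at hP
  refine map₂_le.mpr fun a _ => ?_
  suffices hle : map₂ br P P ≤ (map₂ br P P).comap (br a) from fun x hx => hle hx
  refine map₂_le.mpr fun i hi j hj => ?_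
  rw [mem_comap, hbr]
  exact add_mem (apply_mem_map₂ br (hP a mem_top i hi) hj)
    (apply_mem_map₂ br hi (hP a mem_top j hj))

theorem IsLeibniz.map₂_map₂_top_le (hbr : IsLeibniz br) (hP : map₂ br P ⊤ ≤ P) :
    map₂ br (map₂ br P P) ⊤ ≤ map₂ br P P := by
  rw [map₂_le] at hP
  refine map₂_le.mpr fun x hx a _ => ?_
  suffices hle : map₂ br P P ≤ (map₂ br P P).comap (br.flip a) from hle hx
  refine map₂_le.mpr fun i hi j hj => ?_
  rw [mem_comap, LinearMap.flip_apply, hbr.map_apply]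
  exact sub_mem (apply_mem_map₂ br hi (hP j hj a mem_top))
    (apply_mem_map₂ br hj (hP i hi a mem_top))

theorem IsLeibniz.map₂_top_derSeries_le (hbr : IsLeibniz br) (k : ℕ) :
    map₂ br ⊤ (derSeries br k) ≤ derSeries br k := by
  induction k with
  | zero => exact le_top
  | succ k ih =>
    rw [derSeries, bracketSpan_eq_map₂]
    exact hbr.map₂_top_map₂_le ih

theorem IsLeibniz.map₂_derSeries_top_le (hbr : IsLeibniz br) (k : ℕ) :
    map₂ br (derSeries br k) ⊤ ≤ derSeries br k := by
  induction k with
  | zero => exact le_top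
  | succ k ih =>
    rw [derSeries, bracketSpan_eq_map₂]
    exact hbr.map₂_map₂_top_le ih

theorem antitone_derSeries (br : A →ₗ[K] A →ₗ[K] A) : Antitone (derSeries br) := by
  refine antitone_nat_of_succ_le fun k => ?_
  induction k with
  | zero => exact le_top
  | succ k ih =>
    simp only [derSeries, bracketSpan_eq_map₂] at ih ⊢
    exact map₂_le_map₂ ih ih

theorem exists_map₂_derSeries_eq [FiniteDimensional K A] (br : A →ₗ[K] A →ₗ[K] A) :
    ∃ k, map₂ br (derSeries br k) (derSeries br k) = derSeries br k := by
  obtain ⟨k, hk⟩ := IsArtinian.monotone_stabilizes ⟨derSeries br, antitone_derSeries br⟩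
  exact ⟨k, (bracketSpan_eq_map₂ br _ _).symm.trans (hk (k + 1) k.le_succ).symm⟩

theorem IsLeibnizDerivation.apply_mem_of_perfect (hD : IsLeibnizDerivation br D (n + 2))
    (hleft : map₂ br ⊤ P ≤ P) (hright : map₂ br P ⊤ ≤ P) (hperf : map₂ br P P = P) :
    ∀ x ∈ P, D x ∈ P := by
  let Γ : Submodule K (A × A) := P.map (LinearMap.id.prod D)
  have hΓfst : Γ.map (LinearMap.fst K A A) = P := by
    rw [← Submodule.map_comp, LinearMap.fst_prod, Submodule.map_id]
  have hfst (k : ℕ) :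
      (leftNormedSpan (tangentBracket br) Γ (k + 1)).map (LinearMap.fst K A A) = P := by
    rw [map_leftNormedSpan fun _ _ => rfl, hΓfst, leftNormedSpan_eq_self_of_map₂_eq_self br hperf]
  have hprod : leftNormedSpan (tangentBracket br) Γ (n + 2) ≤ P.prod P := by
    rw [leftNormedSpan_add_two, map₂_le]
    intro u hu v hv
    have hu : u.1 ∈ P := hΓfst.le (mem_map_of_mem hu)
    have hv : v.1 ∈ P := (hfst n).le (mem_map_of_mem hv)
    exact ⟨hleft (apply_mem_map₂ br mem_top hv), add_mem
      (hleft (apply_mem_map₂ br mem_top hv)) (hright (apply_mem_map₂ br hu mem_top))⟩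
  have hΓ : Γ ≤ D.graph := by
    rintro _ ⟨x, -, rfl⟩
    exact rfl
  intro x hx
  obtain ⟨⟨_, x'⟩, hx', rfl⟩ := (hfst (n + 1)).ge hx
  have hDx : x' = D _ := isLeibnizDerivation_iff_leftNormedSpan_graph_le.mp hD
    (leftNormedSpan_mono _ hΓ _ hx')
  exact hDx ▸ (hprod hx').2

/-- The restriction of `br` to a subspace closed under it. -/
def restrictBracket (br : A →ₗ[K] A →ₗ[K] A) (hP : map₂ br P P ≤ P) : P →ₗ[K] P →ₗ[K] P :=
  LinearMap.mk₂ K (fun a b => ⟨br a b, hP (apply_mem_map₂ br a.2 b.2)⟩)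
    (fun _ _ _ => Subtype.ext (by simp)) (fun _ _ _ => Subtype.ext (by simp))
    (fun _ _ _ => Subtype.ext (by simp)) (fun _ _ _ => Subtype.ext (by simp))

theorem IsLeibniz.restrictBracket (hbr : IsLeibniz br) (hP : map₂ br P P ≤ P) :
    IsLeibniz (restrictBracket br hP) :=
  fun a b c => Subtype.ext (hbr a b c)

theorem map₂_restrictBracket_top (hP : map₂ br P P = P) :
    map₂ (restrictBracket br hP.le) ⊤ ⊤ = ⊤ := by
  apply map_injective_of_injective P.injective_subtype
  rw [map_map₂_of_hom (br' := br) fun _ _ => rfl, map_subtype_top, hP]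

theorem IsLeibnizDerivation.restrict (hD : IsLeibnizDerivation br D (n + 1))
    (hP : map₂ br P P ≤ P) (hDP : ∀ x ∈ P, D x ∈ P) :
    IsLeibnizDerivation (restrictBracket br hP) (D.restrict hDP) (n + 1) := by
  rw [isLeibnizDerivation_iff_leftNormedSpan_graph_le] at hD ⊢
  let ι : P × P →ₗ[K] A × A := P.subtype.prodMap P.subtype
  have hgraph : (D.restrict hDP).graph.map ι ≤ D.graph := by
    rintro _ ⟨_, hx, rfl⟩
    exact congrArg Subtype.val hx
  intro u hu
  have hιu := mem_map_of_mem (f := ι) hu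
  rw [map_leftNormedSpan (br' := tangentBracket br) fun _ _ => rfl] at hιu
  exact Subtype.ext (hD (leftNormedSpan_mono _ hgraph _ hιu))

theorem IsLeibnizDerivation.exists_derSeries_eq_bot [CharZero K] [IsAlgClosed K]
    [FiniteDimensional K A] (hD : IsLeibnizDerivation br D (n + 2)) (hinj : Function.Injective D)
    (hbr : IsLeibniz br) : ∃ k, derSeries br k = ⊥ := by
  obtain ⟨k, hperf⟩ := exists_map₂_derSeries_eq br
  have hDP := hD.apply_mem_of_perfect (hbr.map₂_top_derSeries_le k) (hbr.map₂_derSeries_top_le k)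
    hperf
  have hrestrict_inj : Function.Injective (D.restrict hDP) :=
    fun _ _ h => Subtype.ext (hinj (congrArg Subtype.val h))
  have hsub : Subsingleton (derSeries br k) := (hD.restrict hperf.le hDP).subsingleton_of_perfect
    hrestrict_inj (hbr.restrictBracket hperf.le) (map₂_restrictBracket_top hperf)
  exact ⟨k, subsingleton_iff_eq_bot.mp hsub⟩

theorem IsLeibnizDerivation.exists_lcs_eq_bot [CharZero K] [IsAlgClosed K]
    [FiniteDimensional K A] (hD : IsLeibnizDerivation br D (n + 2)) (hinj : Function.Injective D)
    (hbr : IsLeibniz br) : ∃ m, lcs br m = ⊥ := by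
  obtain ⟨k, hk⟩ := hD.exists_derSeries_eq_bot hinj hbr
  refine hbr.exists_lcs_eq_bot_of_derSeries_eq_bot hk (span_iUnion_maxGenEigenspace D) ?_
  intro x hx
  obtain ⟨c, hc⟩ := Set.mem_iUnion.mp hx
  exact hD.isNilpotent_apply n.succ_ne_zero hinj hc

end Ideals

/-- a finite-dimensional (left) Leibniz algebra over an algebraically
closed field of characteristic zero is nilpotent iff it admits an invertible Leibniz
derivation of order `s` for some `s ≥ 2`. -/
theorem leibniz_nilpotent_iff_invertible_leibniz_derivation
    {K A : Type*} [Field K] [IsAlgClosed K] [CharZero K]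
    [AddCommGroup A] [Module K A] [FiniteDimensional K A]
    (br : A →ₗ[K] A →ₗ[K] A)
    (leibniz : ∀ a b c : A, br a (br b c) = br (br a b) c + br b (br a c)) :
    (∃ m : ℕ, lcs br m = ⊥) ↔
      ∃ s : ℕ, 2 ≤ s ∧ ∃ D : A →ₗ[K] A, Function.Bijective D ∧
        ∀ x : Fin s → A,
          D (leftNormedProd br (List.ofFn x)) =
            ∑ j : Fin s,
              leftNormedProd br (List.ofFn (Function.update x j (D (x j)))) := by
  constructor
  · rintro ⟨m, hm⟩
    have hlcs : lcs br (m + 1) = ⊥ := by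
      rw [lcs, hm, bracketSpan_eq_map₂, Submodule.map₂_bot_right]
    exact ⟨m + 2, Nat.le_add_left 2 m, LinearMap.id, Function.bijective_id,
      isLeibnizDerivation_of_lcs_eq_bot hlcs LinearMap.id⟩
  · rintro ⟨s, hs, D, hD, hder⟩
    obtain ⟨n, rfl⟩ := Nat.exists_eq_add_of_le' hs
    exact IsLeibnizDerivation.exists_lcs_eq_bot hder hD.injective leibniz
end

section
/- Let A be a finite-dimensional (left) Leibniz algebra over a field. For any a ∈ A, there exists b ∈ E_A(a) such that E_A(a) = E_A(b). -/
/-- The Engel subalgebra `E_A(a)`: the Fitting null component of the left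
multiplication operator `L_a = br a`, i.e. `{x : A | ∃ k, (L_a)^k x = 0}`. -/
def engel {K A : Type*} [Field K] [AddCommGroup A] [Module K A]
    (br : A →ₗ[K] A →ₗ[K] A) (a : A) : Submodule K A :=
  ⨆ k : ℕ, LinearMap.ker ((br a) ^ k)

/-!
Since `L_a` is a derivation, `[a, a]` lies in the left centre `ker br`, and `L_a` maps `ker br` to
itself. A nonzero polynomial annihilating `a` under `L_a` divides some `X ^ n * (r * X + 1)`, so
`b = a + r(L_a) [a, a]` is killed by `L_a ^ n`. Because `b - a` is in the left centre, `L_b = L_a`,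
hence `b ∈ E_A(a) = E_A(b)`.
-/

section Fitting

open Polynomial

variable {K : Type*} [Field K]

theorem exists_dvd_X_pow_mul_mul_X_add_one {p : K[X]} (hp : p ≠ 0) :
    ∃ (n : ℕ) (r : K[X]), p ∣ X ^ n * (r * X + 1) := by
  obtain ⟨q, hpq, hq⟩ := p.exists_eq_pow_rootMultiplicity_mul_and_not_dvd hp 0
  rw [C_0, sub_zero] at hpq hq
  have hcoeff : q.coeff 0 ≠ 0 := mt X_dvd_iff.mpr hq
  have hnormalize : C (q.coeff 0)⁻¹ * q.divX * X + 1 = q * C (q.coeff 0)⁻¹ := by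
    calc C (q.coeff 0)⁻¹ * q.divX * X + 1
        = C (q.coeff 0)⁻¹ * (q.divX * X + C (q.coeff 0)) := by
          rw [mul_add, ← C_mul, inv_mul_cancel₀ hcoeff, C_1, mul_assoc]
      _ = q * C (q.coeff 0)⁻¹ := by rw [divX_mul_X_add, mul_comm]
  refine ⟨p.rootMultiplicity 0, C (q.coeff 0)⁻¹ * q.divX, C (q.coeff 0)⁻¹, ?_⟩
  rw [hnormalize, ← mul_assoc, ← hpq]

theorem exists_pow_apply_add_aeval_apply_eq_zero {V : Type*} [AddCommGroup V] [Module K V]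
    (f : Module.End K V) {p : K[X]} (hp : p ≠ 0) {v : V} (hpv : aeval f p v = 0) :
    ∃ (n : ℕ) (r : K[X]), (f ^ n) (v + aeval f r (f v)) = 0 := by
  obtain ⟨n, r, s, hs⟩ := exists_dvd_X_pow_mul_mul_X_add_one hp
  refine ⟨n, r, ?_⟩
  calc (f ^ n) (v + aeval f r (f v))
      = aeval f (X ^ n * (r * X + 1)) v := by simp [add_comm]
    _ = aeval f s (aeval f p v) := by rw [hs, mul_comm, map_mul, Module.End.mul_apply]
    _ = 0 := by rw [hpv, map_zero]

end Fitting

section LeftCentre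

variable {R A : Type*} [CommSemiring R] [AddCommGroup A] [Module R A]
  {br : A →ₗ[R] A →ₗ[R] A} {a : A}

theorem bracket_self_mem_ker
    (leibniz : ∀ y : A, br a (br a y) = br (br a a) y + br a (br a y)) :
    br a a ∈ LinearMap.ker br :=
  LinearMap.mem_ker.mpr <| LinearMap.ext fun y => right_eq_add.mp (leibniz y)

theorem ker_bracket_mem_invtSubmodule
    (leibniz : ∀ x y : A, br a (br x y) = br (br a x) y + br x (br a y)) :
    LinearMap.ker br ∈ Module.End.invtSubmodule (br a) := by
  intro x hx
  rw [LinearMap.mem_ker] at hx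
  refine LinearMap.mem_ker.mpr <| LinearMap.ext fun y => ?_
  simpa [hx] using (leibniz x y).symm

end LeftCentre

theorem leibniz_engel_subalgebra_generator_inside_general
    {K A : Type*} [Field K] [AddCommGroup A] [Module K A]
    (br : A →ₗ[K] A →ₗ[K] A) (a : A)
    (leibniz : ∀ x y : A, br a (br x y) = br (br a x) y + br x (br a y))
    {p : Polynomial K} (hp : p ≠ 0) (hpa : Polynomial.aeval (br a) p a = 0) :
    ∃ b ∈ engel br a, engel br a = engel br b := by
  obtain ⟨n, r, hn⟩ := exists_pow_apply_add_aeval_apply_eq_zero (br a) hp hpa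
  have hcentral : Polynomial.aeval (br a) r (br a a) ∈ LinearMap.ker br :=
    Polynomial.aeval_apply_smul_mem_of_le_comap (bracket_self_mem_ker (leibniz a)) r (br a)
      (ker_bracket_mem_invtSubmodule leibniz)
  refine ⟨a + Polynomial.aeval (br a) r (br a a), Submodule.mem_iSup_of_mem n hn, ?_⟩
  rw [engel, engel, map_add, LinearMap.mem_ker.mp hcentral, add_zero]

/-- in a finite-dimensional (left) Leibniz algebra, for any `a` there
exists `b ∈ E_A(a)` with `E_A(a) = E_A(b)`. -/
theorem leibniz_engel_subalgebra_generator_inside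
    {K A : Type*} [Field K]
    [AddCommGroup A] [Module K A] [FiniteDimensional K A]
    (br : A →ₗ[K] A →ₗ[K] A)
    (leibniz : ∀ a b c : A, br a (br b c) = br (br a b) c + br b (br a c))
    (a : A) :
    ∃ b ∈ engel br a, engel br a = engel br b := by
  have hminpoly : minpoly K (br a) ≠ 0 := minpoly.ne_zero (Algebra.IsIntegral.isIntegral (br a))
  exact leibniz_engel_subalgebra_generator_inside_general br a (leibniz a) hminpoly (by simp)
end

section
/- Let A be a finite-dimensional (left) Leibniz algebra over a field, let M be a subalgebra of A and let a ∈ A. Suppose the Engel subalgebra E_A(a) is contained in M. Then M equals its own right normalizer: M = N^r_A(M). -/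
/-!
Fitting's lemma on a submodule `V` stable under `f` shows that every `x` with `f x ∈ V` lies in `V`
plus the Fitting null component of `f`: writing `f x = u + f ^ (n + 1) v` with `u, v ∈ V` and
`f ^ (n + 1) u = 0`, the difference `x - f ^ n v` is killed by `f ^ (n + 2)`. Taking `f = L_a`,
this is used twice. First, `V` is the left centre `{z | L_z = 0}`: it contains `[a, a]`, so `a` is
congruent modulo the left centre to some `b ∈ E_A(a)`, which therefore satisfies `L_b = L_a`. As
`b ∈ M`, the subalgebra `M` is stable under `L_a` even though `a` need not lie in `M`. Second,
`V = M`: if `x` is in the right normalizer of `M`, then `[a, x] = [b, x] ∈ M`, hence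
`x ∈ M + E_A(a) = M`.
-/

section Fitting

variable {R M : Type*} [Ring R] [AddCommGroup M] [Module R M]

theorem comap_le_sup_iSup_ker_pow {f : Module.End R M} {V : Submodule R M} [IsArtinian R V]
    (hV : V ∈ f.invtSubmodule) : V.comap f ≤ V ⊔ ⨆ k : ℕ, LinearMap.ker (f ^ k) := by
  intro x hx
  let g : Module.End R V := f.restrict hV
  have coe_pow (k : ℕ) (v : V) : ((g ^ k) v : M) = (f ^ k) v :=
    congrArg Subtype.val (LinearMap.congr_fun (Module.End.pow_restrict k hV) v)
  obtain ⟨n, hn⟩ := Filter.eventually_atTop.mp g.eventually_codisjoint_ker_pow_range_pow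
  obtain ⟨u, _, hu, ⟨v, rfl⟩, huv⟩ :=
    Submodule.codisjoint_iff_exists_add_eq.mp (hn (n + 1) n.le_succ) ⟨f x, hx⟩
  have hfx : f (x - (g ^ n) v) = u := by
    rw [map_sub, sub_eq_iff_eq_add, coe_pow, ← Module.End.mul_apply, ← pow_succ', ← coe_pow]
    exact (congrArg Subtype.val huv).symm
  have hker : x - (g ^ n) v ∈ LinearMap.ker (f ^ (n + 2)) := by
    rw [LinearMap.mem_ker, pow_succ, Module.End.mul_apply, hfx, ← coe_pow,
      LinearMap.mem_ker.mp hu, ZeroMemClass.coe_zero]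
  exact Submodule.mem_sup.mpr ⟨(g ^ n) v, ((g ^ n) v).2, x - (g ^ n) v,
    Submodule.mem_iSup_of_mem (n + 2) hker, add_sub_cancel _ _⟩

theorem comap_eq_of_iSup_ker_pow_le {f : Module.End R M} {V : Submodule R M} [IsArtinian R V]
    (hV : V ∈ f.invtSubmodule) (hle : ⨆ k : ℕ, LinearMap.ker (f ^ k) ≤ V) : V.comap f = V :=
  le_antisymm ((comap_le_sup_iSup_ker_pow hV).trans (sup_le le_rfl hle)) hV

end Fitting

section Leibniz

variable {R A : Type*} [CommRing R] [AddCommGroup A] [Module R A] {br : A →ₗ[R] A →ₗ[R] A}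

/-- The left Leibniz identity for the bracket `br`: every left multiplication `br a` is a derivation
of `br`. The left centre of the Leibniz algebra is then `LinearMap.ker br`. -/
def IsLeftLeibniz (br : A →ₗ[R] A →ₗ[R] A) : Prop :=
  ∀ a b c : A, br a (br b c) = br (br a b) c + br b (br a c)

namespace IsLeftLeibniz

theorem bracket_self_mem_ker (h : IsLeftLeibniz br) (a : A) : br a a ∈ LinearMap.ker br :=
  LinearMap.mem_ker.mpr <| LinearMap.ext fun c => right_eq_add.mp (h a a c)

theorem ker_mem_invtSubmodule (h : IsLeftLeibniz br) (a : A) :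
    LinearMap.ker br ∈ Module.End.invtSubmodule (br a) := by
  intro z hz
  rw [LinearMap.mem_ker] at hz
  refine LinearMap.mem_ker.mpr (LinearMap.ext fun c => ?_)
  simpa [hz] using (h a z c).symm

theorem exists_mem_iSup_ker_pow_bracket_eq [IsArtinian R (LinearMap.ker br)]
    (h : IsLeftLeibniz br) (a : A) : ∃ b ∈ ⨆ k : ℕ, LinearMap.ker (br a ^ k), br b = br a := by
  obtain ⟨z, hz, b, hb, hzb⟩ := Submodule.mem_sup.mp <|
    comap_le_sup_iSup_ker_pow (h.ker_mem_invtSubmodule a) (h.bracket_self_mem_ker a)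
  refine ⟨b, hb, ?_⟩
  rw [← hzb, map_add, LinearMap.mem_ker.mp hz, zero_add]

end IsLeftLeibniz

theorem leibniz_engel_subalgebra_self_right_normalizing_general [IsArtinian R (LinearMap.ker br)]
    (leibniz : IsLeftLeibniz br) (M : Submodule R A) [IsArtinian R M]
    (hM : ∀ x ∈ M, ∀ y ∈ M, br x y ∈ M) (a : A) (hE : ⨆ k : ℕ, LinearMap.ker (br a ^ k) ≤ M)
    (x : A) : x ∈ M ↔ ∀ m ∈ M, br m x ∈ M := by
  refine ⟨fun hx m hm => hM m hm x hx, fun hx => ?_⟩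
  obtain ⟨b, hb, hba⟩ := leibniz.exists_mem_iSup_ker_pow_bracket_eq a
  have hbM : b ∈ M := hE hb
  have hinv : M ∈ Module.End.invtSubmodule (br a) := hba ▸ hM b hbM
  have hax : br a x ∈ M := hba ▸ hx b hbM
  rwa [← comap_eq_of_iSup_ker_pow_le hinv hE]

end Leibniz

/-- a subalgebra `M` of a finite-dimensional (left) Leibniz algebra
containing an Engel subalgebra `E_A(a)` equals its own right normalizer. -/
theorem leibniz_engel_subalgebra_self_right_normalizing
    {K A : Type*} [Field K]
    [AddCommGroup A] [Module K A] [FiniteDimensional K A]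
    (br : A →ₗ[K] A →ₗ[K] A)
    (leibniz : ∀ a b c : A, br a (br b c) = br (br a b) c + br b (br a c))
    (M : Submodule K A)
    (hM : ∀ x ∈ M, ∀ y ∈ M, br x y ∈ M)
    (a : A) (hE : engel br a ≤ M) :
    ∀ x : A, x ∈ M ↔ ∀ m ∈ M, br m x ∈ M :=
  leibniz_engel_subalgebra_self_right_normalizing_general leibniz M hM a hE
end
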